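/- arXiv:1407.7258 — 2 statements merged into one kernel-verified Lean document; each statement's English description precedes it below -/
import Mathlib

section
/- Let X and Y be separable Banach spaces and let 𝒢_{D,Φ} = { Σ_{n=1}^{N} y_n⊗x_n* : y_n ∈ D, x_n* ∈ Φ, N ∈ ℕ }. Then: (1) if D is a countable dense subset of Y and Φ is a countable weak*-dense subset of X*, then 𝒢_{D,Φ} is a countable SOT-dense subset of L(X,Y); (2) if moreover X* is separable, Y has the approximation property, and Φ is norm-dense in X*, then 𝒢_{D,Φ} is norm-dense in K(X,Y) and COT-dense in L(X,Y). -/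
/-!
Both density claims follow one pattern. The set `𝒢_{D,Φ}` is an additive submonoid of `L(X,Y)`
(sums concatenate), so its closure is one too, for the norm topology as well as for pointwise
convergence. As `(y, f) ↦ y ⊗ f` is jointly continuous in both settings, that closure contains
`y ⊗ f` for all `y` and `f` as soon as `D` is dense and `Φ` is dense in the corresponding topology
of the dual, hence it contains every finite-rank operator, such an operator being a finite sum of
rank-one ones (`finiteRank_mem`).

It remains to approximate an arbitrary `T` by finite-rank operators. For pointwise convergence,
a finite set `I ⊆ X` spans a finite-dimensional, hence complemented, subspace, and `T ∘ P` with `P`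
a continuous projection onto it agrees with `T` on `I`. With the approximation property of `Y`, a
finite-rank `F` close to the identity on a compact set containing `T(K)` (respectively the image of
the unit ball, when `T` is compact) makes `F ∘ T` uniformly close to `T` on `K`
(respectively close in norm). On a compact, hence bounded, set norm-closeness gives uniform
closeness, so for COT a last norm-approximation of `F ∘ T` by `𝒢_{D,Φ}` suffices.
-/

open Filter Topology

noncomputable section

/-- `q`-frequent hypercyclicity of a self-map `T` with respect to an explicitly
given topology `τ`: some orbit visits every nonempty `τ`-open set along a set of
positive `q`-lower density. -/
def qFreqHypercyclicFor {X : Type*} (τ : TopologicalSpace X) (q : ℕ) (T : X → X) : Prop :=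
  ∃ x : X, ∀ U : Set X, @IsOpen X τ U → U.Nonempty →
    0 < Filter.liminf
      (fun N : ℕ => (Nat.card {n : ℕ | n ≤ N ^ q ∧ T^[n] x ∈ U} : ℝ) / N) Filter.atTop

/-- `q`-frequent hypercyclicity with respect to the ambient topology. -/
def qFreqHypercyclic {X : Type*} [τ : TopologicalSpace X] (q : ℕ) (T : X → X) : Prop :=
  qFreqHypercyclicFor τ q T

/-- The strong operator topology (topology of pointwise convergence) on `X →L[𝕜] Y`. -/
def SOT (𝕜 X Y : Type*) [NontriviallyNormedField 𝕜] [NormedAddCommGroup X] [NormedSpace 𝕜 X]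
    [NormedAddCommGroup Y] [NormedSpace 𝕜 Y] : TopologicalSpace (X →L[𝕜] Y) :=
  TopologicalSpace.induced (fun T => (⇑T : X → Y)) Pi.topologicalSpace

/-- The topology of uniform convergence on compact subsets on `X →L[𝕜] Y`. -/
def COT (𝕜 X Y : Type*) [NontriviallyNormedField 𝕜] [NormedAddCommGroup X] [NormedSpace 𝕜 X]
    [NormedAddCommGroup Y] [NormedSpace 𝕜 Y] : TopologicalSpace (X →L[𝕜] Y) :=
  TopologicalSpace.induced
    (fun T => UniformOnFun.ofFun {K : Set X | IsCompact K} (⇑T)) inferInstance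

/-- The `q`-Frequent Hypercyclicity Criterion for a map `f` on a (semi)normed space:
there is a dense set `D` such that every `x ∈ D` admits a sequence `(x_n)` with `x_0 = x`,
the series `∑_{n=0}^r f^[r^q-(r-n)^q] x` and `∑_{n≥0} x_{(n+r)^q-r^q}` converge
unconditionally, uniformly in `r ≥ 0`, and `f^[n^q] x_{n^q} = x`,
`f^[n^q] x_{m^q} = x_{m^q-n^q}` for `m > n ≥ 0`. -/
def QFHCCriterionOn {E : Type*} [SeminormedAddCommGroup E] (q : ℕ) (f : E → E) : Prop :=
  ∃ D : Set E, Dense D ∧ ∀ x ∈ D, ∃ xs : ℕ → E, xs 0 = x ∧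
    (∀ δ : ℝ, 0 < δ → ∃ N : ℕ, ∀ F : Finset ℕ, (∀ n ∈ F, N ≤ n) → ∀ r : ℕ,
      ‖∑ n ∈ F, if n ≤ r then f^[r ^ q - (r - n) ^ q] x else 0‖ < δ) ∧
    (∀ δ : ℝ, 0 < δ → ∃ N : ℕ, ∀ F : Finset ℕ, (∀ n ∈ F, N ≤ n) → ∀ r : ℕ,
      ‖∑ n ∈ F, xs ((n + r) ^ q - r ^ q)‖ < δ) ∧
    (∀ n : ℕ, f^[n ^ q] (xs (n ^ q)) = x) ∧
    (∀ m n : ℕ, n < m → f^[n ^ q] (xs (m ^ q)) = xs (m ^ q - n ^ q))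

/-- The approximation property for a normed space `X` over `𝕜`. -/
def HasAP (𝕜 X : Type*) [NontriviallyNormedField 𝕜] [NormedAddCommGroup X]
    [NormedSpace 𝕜 X] : Prop :=
  ∀ K : Set X, IsCompact K → ∀ ε : ℝ, 0 < ε →
    ∃ F : X →L[𝕜] X, FiniteDimensional 𝕜 (LinearMap.range (F : X →ₗ[𝕜] X)) ∧
      ∀ x ∈ K, ‖F x - x‖ < ε

/-- The set `𝒢_{D,Φ}` of finite sums `∑_{n=1}^N y_n ⊗ x_n*` of rank-one operators
with `y_n ∈ D` and `x_n* ∈ Φ`. -/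
def rankOneSums {𝕜 X Y : Type*} [NontriviallyNormedField 𝕜] [NormedAddCommGroup X]
    [NormedSpace 𝕜 X] [NormedAddCommGroup Y] [NormedSpace 𝕜 Y]
    (D : Set Y) (Φ : Set (X →L[𝕜] 𝕜)) : Set (X →L[𝕜] Y) :=
  {S | ∃ (N : ℕ) (y : Fin N → Y) (f : Fin N → (X →L[𝕜] 𝕜)),
    (∀ i, y i ∈ D) ∧ (∀ i, f i ∈ Φ) ∧ S = ∑ i, (f i).smulRight (y i)}

section Helpers

variable {𝕜 X Y : Type*} [RCLike 𝕜]
  [NormedAddCommGroup X] [NormedSpace 𝕜 X] [NormedAddCommGroup Y] [NormedSpace 𝕜 Y]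

lemma rankOneSums_countable {D : Set Y} {Φ : Set (X →L[𝕜] 𝕜)}
    (hD : D.Countable) (hΦ : Φ.Countable) : (rankOneSums D Φ).Countable := by
  have h : rankOneSums D Φ ⊆ ⋃ N : ℕ,
      (fun p : (Fin N → Y) × (Fin N → (X →L[𝕜] 𝕜)) => ∑ i, (p.2 i).smulRight (p.1 i)) ''
        ((Set.univ.pi fun _ => D) ×ˢ (Set.univ.pi fun _ => Φ)) := by
    rintro S ⟨N, y, f, hy, hf, rfl⟩
    exact Set.mem_iUnion.2 ⟨N, (y, f), ⟨fun i _ => hy i, fun i _ => hf i⟩, rfl⟩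
  refine (Set.countable_iUnion fun N => ?_).mono h
  exact ((Set.countable_univ_pi fun _ => hD).prod (Set.countable_univ_pi fun _ => hΦ)).image _

/-- `𝒢_{D,Φ}` as an additive submonoid of `L(X,Y)`. -/
def rankOneMonoid (D : Set Y) (Φ : Set (X →L[𝕜] 𝕜)) : AddSubmonoid (X →L[𝕜] Y) where
  carrier := rankOneSums D Φ
  zero_mem' := ⟨0, Fin.elim0, Fin.elim0, fun i => i.elim0, fun i => i.elim0, by simp⟩
  add_mem' := by
    rintro _ _ ⟨N, y, f, hy, hf, rfl⟩ ⟨M, z, g, hz, hg, rfl⟩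
    refine ⟨N + M, Fin.append y z, Fin.append f g, fun i => ?_, fun i => ?_, ?_⟩
    · refine Fin.addCases (fun i => ?_) (fun i => ?_) i
      · simpa using hy i
      · simpa using hz i
    · refine Fin.addCases (fun i => ?_) (fun i => ?_) i
      · simpa using hf i
      · simpa using hg i
    · simp [Fin.sum_univ_add]

lemma smulRight_mem_rankOneMonoid {D : Set Y} {Φ : Set (X →L[𝕜] 𝕜)} {y : Y} {f : X →L[𝕜] 𝕜}
    (hy : y ∈ D) (hf : f ∈ Φ) : f.smulRight y ∈ rankOneMonoid D Φ :=
  ⟨1, fun _ => y, fun _ => f, fun _ => hy, fun _ => hf, by simp⟩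

/-- A finite-rank operator is a finite sum of rank-one operators, by expanding its values in a
basis of its range. -/
lemma finiteRank_mem (M : AddSubmonoid (X →L[𝕜] Y))
    (hM : ∀ (y : Y) (f : X →L[𝕜] 𝕜), f.smulRight y ∈ M) (S : X →L[𝕜] Y)
    (hS : FiniteDimensional 𝕜 (LinearMap.range (S : X →ₗ[𝕜] Y))) : S ∈ M := by
  let R := LinearMap.range (S : X →ₗ[𝕜] Y)
  let b := Module.finBasis 𝕜 R
  let S' : X →L[𝕜] R := S.codRestrict R fun x => LinearMap.mem_range_self (S : X →ₗ[𝕜] Y) x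
  have h : S = ∑ i, ((LinearMap.toContinuousLinearMap (b.coord i)).comp S').smulRight
      (b i : Y) := by
    ext x
    have h := congrArg R.subtype (b.sum_repr (S' x))
    rw [map_sum] at h
    simpa [S'] using h.symm
  rw [h]
  exact M.sum_mem fun i _ => hM _ _

lemma finiteDimensional_range_comp_left (F : Y →L[𝕜] Y)
    (hF : FiniteDimensional 𝕜 (LinearMap.range (F : Y →ₗ[𝕜] Y))) (T : X →L[𝕜] Y) :
    FiniteDimensional 𝕜 (LinearMap.range ((F.comp T : X →L[𝕜] Y) : X →ₗ[𝕜] Y)) := by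
  refine Submodule.finiteDimensional_of_le (S₂ := LinearMap.range (F : Y →ₗ[𝕜] Y)) ?_
  rintro _ ⟨x, rfl⟩
  exact ⟨T x, rfl⟩

lemma finiteRank_mem_closure {D : Set Y} {Φ : Set (X →L[𝕜] 𝕜)} (hD : Dense D) (hΦ : Dense Φ)
    (S : X →L[𝕜] Y) (hS : FiniteDimensional 𝕜 (LinearMap.range (S : X →ₗ[𝕜] Y))) :
    S ∈ closure (rankOneSums D Φ) := by
  refine finiteRank_mem (rankOneMonoid D Φ).topologicalClosure (fun y f => ?_) S hS
  have hc : Continuous (Function.uncurry fun (y : Y) (f : X →L[𝕜] 𝕜) => f.smulRight y) := by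
    have := ((ContinuousLinearMap.smulRightL 𝕜 X Y).continuous₂).comp
      (continuous_swap (X := Y) (Y := X →L[𝕜] 𝕜))
    exact this
  have key := map_mem_closure₂ (u := rankOneSums D Φ) hc (hD y) (hΦ f)
    fun y hy f hf => smulRight_mem_rankOneMonoid hy hf
  exact key

lemma finiteRank_mem_closure_pointwise {D : Set Y} {Φ : Set (X →L[𝕜] 𝕜)} (hD : Dense D)
    (hΦ : @Dense (X →L[𝕜] 𝕜) (SOT 𝕜 X 𝕜) Φ)
    (S : X →L[𝕜] Y) (hS : FiniteDimensional 𝕜 (LinearMap.range (S : X →ₗ[𝕜] Y))) :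
    (⇑S : X → Y) ∈ closure ((fun T : X →L[𝕜] Y => (⇑T : X → Y)) '' rankOneSums D Φ) := by
  let e : (X →L[𝕜] Y) →+ (X → Y) :=
    { toFun := fun T => ⇑T, map_zero' := rfl, map_add' := fun _ _ => rfl }
  refine finiteRank_mem (((rankOneMonoid D Φ).map e).topologicalClosure.comap e)
    (fun y f => ?_) S hS
  have hf : (⇑f : X → 𝕜) ∈ closure ((fun g : X →L[𝕜] 𝕜 => (⇑g : X → 𝕜)) '' Φ) :=
    closure_induced.1 (hΦ f)
  have hc : Continuous (Function.uncurry fun (y : Y) (g : X → 𝕜) => fun x => g x • y) := by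
    unfold Function.uncurry
    fun_prop
  have key := map_mem_closure₂ (u := e '' rankOneSums D Φ) hc (hD y) hf (by
    rintro y hy _ ⟨f, hf, rfl⟩
    exact ⟨_, smulRight_mem_rankOneMonoid hy hf, rfl⟩)
  exact key

lemma mem_closure_of_forall_finset {α β : Type*} [TopologicalSpace β] {s : Set (α → β)}
    {f : α → β}
    (h : ∀ I : Finset α, ∃ g ∈ s, ∀ i ∈ I, g i = f i) : f ∈ closure s := by
  rw [mem_closure_iff_nhds, nhds_pi]
  intro t ht
  obtain ⟨I, u, hu, hut⟩ := Filter.mem_pi'.1 ht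
  obtain ⟨g, hg, hgf⟩ := h I
  refine ⟨g, hut fun i hi => ?_, hg⟩
  rw [hgf i hi]
  exact mem_of_mem_nhds (hu i)

/-- On any finite set, an operator agrees with some finite-rank operator. -/
lemma exists_finiteRank_eqOn (T : X →L[𝕜] Y) (I : Finset X) :
    ∃ S : X →L[𝕜] Y, FiniteDimensional 𝕜 (LinearMap.range (S : X →ₗ[𝕜] Y)) ∧
      ∀ i ∈ I, S i = T i := by
  let V := Submodule.span 𝕜 (I : Set X)
  have : FiniteDimensional 𝕜 V := FiniteDimensional.span_finset 𝕜 I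
  obtain ⟨P, hP⟩ := Submodule.ClosedComplemented.of_finiteDimensional V
  refine ⟨(T.comp V.subtypeL).comp P, ?_, fun i hi => ?_⟩
  · refine Submodule.finiteDimensional_of_le
      (S₂ := LinearMap.range ((T.comp V.subtypeL : V →L[𝕜] Y) : V →ₗ[𝕜] Y)) ?_
    rintro _ ⟨x, rfl⟩
    exact ⟨P x, rfl⟩
  · have := hP ⟨i, Submodule.subset_span hi⟩
    simp [this]

lemma dense_SOT {D : Set Y} {Φ : Set (X →L[𝕜] 𝕜)} (hD : Dense D)
    (hΦ : @Dense (X →L[𝕜] 𝕜) (SOT 𝕜 X 𝕜) Φ) :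
    @Dense (X →L[𝕜] Y) (SOT 𝕜 X Y) (rankOneSums D Φ) := by
  intro T
  refine closure_induced.2 ?_
  rw [← closure_closure]
  refine mem_closure_of_forall_finset fun I => ?_
  obtain ⟨S, hS, hST⟩ := exists_finiteRank_eqOn T I
  exact ⟨S, finiteRank_mem_closure_pointwise hD hΦ S hS, hST⟩

lemma compact_mem_closure {D : Set Y} {Φ : Set (X →L[𝕜] 𝕜)} (hD : Dense D) (hΦ : Dense Φ)
    (hY : HasAP 𝕜 Y) (T : X →L[𝕜] Y) (hT : IsCompactOperator (⇑T)) :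
    T ∈ closure (rankOneSums D Φ) := by
  rw [← closure_closure, Metric.mem_closure_iff]
  intro ε hε
  have hK : IsCompact (closure (T '' Metric.closedBall 0 1)) :=
    IsCompactOperator.isCompact_closure_image_closedBall (f := (T : X →ₗ[𝕜] Y)) hT 1
  obtain ⟨F, hF, hFK⟩ := hY _ hK (ε / 2) (half_pos hε)
  refine ⟨F.comp T, finiteRank_mem_closure hD hΦ _ (finiteDimensional_range_comp_left F hF T), ?_⟩
  rw [dist_comm, dist_eq_norm]
  refine lt_of_le_of_lt ?_ (half_lt_self hε)
  refine ContinuousLinearMap.opNorm_le_of_unit_norm (half_pos hε).le fun x hx => ?_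
  exact (hFK (T x) (subset_closure ⟨x, by simp [hx], rfl⟩)).le

lemma dense_COT {D : Set Y} {Φ : Set (X →L[𝕜] 𝕜)} (hD : Dense D) (hΦ : Dense Φ)
    (hY : HasAP 𝕜 Y) : @Dense (X →L[𝕜] Y) (COT 𝕜 X Y) (rankOneSums D Φ) := by
  intro T
  refine closure_induced.2 ?_
  have hne : {K : Set X | IsCompact K}.Nonempty := ⟨∅, isCompact_empty⟩
  have hdir : DirectedOn (· ⊆ ·) {K : Set X | IsCompact K} := fun K hK L hL =>
    ⟨K ∪ L, IsCompact.union hK hL, Set.subset_union_left, Set.subset_union_right⟩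
  rw [mem_closure_iff_nhds_basis (UniformOnFun.hasBasis_nhds_of_basis X Y _ _ hne hdir
    Metric.uniformity_basis_dist)]
  rintro ⟨K, ε⟩ ⟨hK, hε⟩
  change IsCompact K at hK
  change 0 < ε at hε
  obtain ⟨F, hF, hFK⟩ := hY _ (hK.image T.continuous) (ε / 2) (half_pos hε)
  obtain ⟨R, hR, hKR⟩ := hK.isBounded.exists_pos_norm_le
  -- Norm-distance below `ε / (2 * R)` moves points of `K`, of norm at most `R`, by less than `ε / 2`.
  obtain ⟨S, hS, hSF⟩ := Metric.mem_closure_iff.1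
    (finiteRank_mem_closure hD hΦ _ (finiteDimensional_range_comp_left F hF T))
    (ε / (2 * R)) (by positivity)
  refine ⟨_, ⟨S, hS, rfl⟩, fun x hx => ?_⟩
  change dist (S x) (T x) < ε
  have h1 : ‖F (T x) - T x‖ < ε / 2 := hFK _ ⟨x, hx, rfl⟩
  have h2 : ‖S x - F (T x)‖ ≤ ε / 2 := by
    rw [dist_comm, dist_eq_norm] at hSF
    calc ‖S x - F (T x)‖ = ‖(S - F.comp T) x‖ := rfl
      _ ≤ ‖S - F.comp T‖ * ‖x‖ := ContinuousLinearMap.le_opNorm _ _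
      _ ≤ ε / (2 * R) * R := by gcongr; exact hKR x hx
      _ = ε / 2 := by field_simp
  calc dist (S x) (T x) ≤ dist (S x) (F (T x)) + dist (F (T x)) (T x) := dist_triangle _ _ _
    _ < ε := by rw [dist_eq_norm, dist_eq_norm]; linarith

end Helpers

/-- Proposition 2.2.  Let `X`, `Y` be separable Banach spaces,
`D ⊆ Y` countable and dense, and `Φ ⊆ X*` countable and weak*-dense (the weak*
topology on `X* = X →L[𝕜] 𝕜` being the topology of pointwise convergence, i.e.
`SOT 𝕜 X 𝕜`).  Then (1) `𝒢_{D,Φ}` is a countable SOT-dense subset of `L(X,Y)`;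
(2) if moreover `X*` is (norm-)separable, `Y` has the approximation property and
`Φ` is norm-dense in `X*`, then `𝒢_{D,Φ}` is norm-dense in `K(X,Y)` (every compact
operator is a norm-limit of members of `𝒢_{D,Φ}`) and COT-dense in `L(X,Y)`. -/
theorem stmt_1 {𝕜 X Y : Type*} [RCLike 𝕜]
    [NormedAddCommGroup X] [NormedSpace 𝕜 X] [CompleteSpace X]
    [NormedAddCommGroup Y] [NormedSpace 𝕜 Y] [CompleteSpace Y]
    [TopologicalSpace.SeparableSpace X] [TopologicalSpace.SeparableSpace Y]
    (D : Set Y) (Φ : Set (X →L[𝕜] 𝕜))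
    (hDc : D.Countable) (hDd : Dense D)
    (hΦc : Φ.Countable) (hΦw : @Dense (X →L[𝕜] 𝕜) (SOT 𝕜 X 𝕜) Φ) :
    ((rankOneSums D Φ).Countable ∧ @Dense (X →L[𝕜] Y) (SOT 𝕜 X Y) (rankOneSums D Φ)) ∧
    (TopologicalSpace.SeparableSpace (X →L[𝕜] 𝕜) → HasAP 𝕜 Y → Dense Φ →
      (∀ T : X →L[𝕜] Y, IsCompactOperator (⇑T) → T ∈ closure (rankOneSums D Φ)) ∧
      @Dense (X →L[𝕜] Y) (COT 𝕜 X Y) (rankOneSums D Φ)) := by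
  exact ⟨⟨rankOneSums_countable hDc hΦc, dense_SOT hDd hΦw⟩, fun _ hY hΦ =>
    ⟨compact_mem_closure hDd hΦ hY, dense_COT hDd hΦ hY⟩⟩
end
end

section
/- Let X and Y be Banach spaces. If Σ_{n≥1} u_{n,j} converges unconditionally in Y, uniformly in j ≥ 0, and {u*_{n,k}} ⊂ X* is such that {u*_{n,k} : n ≥ N_0, k ≥ 1} is norm-bounded for some N_0 ∈ ℕ, then the series Σ_{n≥1} u_{n,j} ⊗ u*_{n,k} converges unconditionally in (L(X,Y), ‖·‖_op), uniformly in j, k ∈ ℕ. -/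
/-!
For a fixed finite set of vectors, if every subset sum has norm at most `ε`, then multiplying the
vectors by scalars of modulus at most `M` gives a sum of norm at most `4 * M * ε`
(`norm_sum_smul_le_of_subset_sums`). By Hahn–Banach this reduces to bounding `∑ ‖g (y n)‖` for a
functional `g` of norm at most one; the real and imaginary parts of the numbers `g (y n)` have
subset sums bounded by `ε`, and splitting by sign bounds each absolute sum by `2 * ε`.
Evaluating the operator `∑ u_{n,j} ⊗ u*_{n,k}` at `x` gives such a sum, with scalars
`u*_{n,k}(x)` of modulus at most `M * ‖x‖`, so the bound is uniform in `j` and `k`.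
-/

open Filter Topology

noncomputable section

theorem rclike_norm_le_abs_re_add_abs_im {𝕜 : Type*} [RCLike 𝕜] (z : 𝕜) :
    ‖z‖ ≤ |RCLike.re z| + |RCLike.im z| := by
  rw [← sq_le_sq₀ (norm_nonneg _) (by positivity), RCLike.norm_sq_eq_def]
  nlinarith [sq_abs (RCLike.re z), sq_abs (RCLike.im z),
    mul_nonneg (abs_nonneg (RCLike.re z)) (abs_nonneg (RCLike.im z))]

theorem sum_abs_le_of_subset_sums {F : Finset ℕ} {a : ℕ → ℝ} {ε : ℝ}
    (h : ∀ G ⊆ F, |∑ n ∈ G, a n| ≤ ε) : ∑ n ∈ F, |a n| ≤ 2 * ε := by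
  rw [← Finset.sum_filter_add_sum_filter_not F (fun n => 0 ≤ a n)]
  have h1 : ∑ n ∈ F with 0 ≤ a n, |a n| = ∑ n ∈ F with 0 ≤ a n, a n :=
    Finset.sum_congr rfl fun n hn => abs_of_nonneg (Finset.mem_filter.1 hn).2
  have h2 : ∑ n ∈ F with ¬ 0 ≤ a n, |a n| = -∑ n ∈ F with ¬ 0 ≤ a n, a n := by
    rw [← Finset.sum_neg_distrib]
    exact Finset.sum_congr rfl fun n hn =>
      abs_of_neg (not_le.1 (Finset.mem_filter.1 hn).2)
  have h3 := (le_abs_self _).trans (h _ (Finset.filter_subset (fun n => 0 ≤ a n) F))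
  have h4 := (neg_le_abs _).trans (h _ (Finset.filter_subset (fun n => ¬ 0 ≤ a n) F))
  rw [h1, h2]
  linarith

/-- Bounded multipliers cost only a constant factor: subset sums of norm at most `ε` and scalars
of modulus at most `M` give a sum of norm at most `4 * M * ε`. -/
theorem norm_sum_smul_le_of_subset_sums {𝕜 Y : Type*} [RCLike 𝕜] [NormedAddCommGroup Y]
    [NormedSpace 𝕜 Y] {F : Finset ℕ} {y : ℕ → Y} {c : ℕ → 𝕜} {ε M : ℝ} (hM : 0 ≤ M)
    (h : ∀ G ⊆ F, ‖∑ n ∈ G, y n‖ ≤ ε) (hc : ∀ n ∈ F, ‖c n‖ ≤ M) :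
    ‖∑ n ∈ F, c n • y n‖ ≤ 4 * M * ε := by
  obtain ⟨g, hg1, hg⟩ := exists_dual_vector'' 𝕜 (∑ n ∈ F, c n • y n)
  have hG : ∀ G ⊆ F, ‖∑ n ∈ G, g (y n)‖ ≤ ε := fun G hGF => by
    rw [← map_sum]
    exact ((g.le_of_opNorm_le hg1 _).trans_eq (one_mul _)).trans (h G hGF)
  have hre : ∑ n ∈ F, |RCLike.re (g (y n))| ≤ 2 * ε := sum_abs_le_of_subset_sums fun G hGF => by
    rw [← map_sum]
    exact (RCLike.abs_re_le_norm _).trans (hG G hGF)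
  have him : ∑ n ∈ F, |RCLike.im (g (y n))| ≤ 2 * ε := sum_abs_le_of_subset_sums fun G hGF => by
    rw [← map_sum]
    exact (RCLike.abs_im_le_norm _).trans (hG G hGF)
  calc ‖∑ n ∈ F, c n • y n‖ = ‖∑ n ∈ F, c n * g (y n)‖ := by
        have := congrArg norm hg
        rw [RCLike.norm_ofReal, abs_norm] at this
        rw [← this, map_sum]
        simp only [map_smul, smul_eq_mul]
    _ ≤ ∑ n ∈ F, M * (|RCLike.re (g (y n))| + |RCLike.im (g (y n))|) := by
        refine norm_sum_le_of_le _ fun n hn => ?_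
        rw [norm_mul]
        exact mul_le_mul (hc n hn) (rclike_norm_le_abs_re_add_abs_im _) (norm_nonneg _) hM
    _ ≤ 4 * M * ε := by
        rw [← Finset.mul_sum, Finset.sum_add_distrib]
        nlinarith [mul_le_mul_of_nonneg_left (add_le_add hre him) hM]

/-- Lemma 3.4.  Let `X`, `Y` be Banach spaces.  If `∑_{n≥1} u_{n,j}`
converges unconditionally in `Y`, uniformly in `j`, and the family
`{u*_{n,k} : n ≥ N₀, k ≥ 1} ⊆ X*` is norm-bounded for some `N₀`, then
`∑_{n≥1} u_{n,j} ⊗ u*_{n,k}` converges unconditionally in `(L(X,Y), ‖·‖_op)`,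
uniformly in `j, k`. -/
theorem stmt_4 {𝕜 X Y : Type*} [RCLike 𝕜]
    [NormedAddCommGroup X] [NormedSpace 𝕜 X] [CompleteSpace X]
    [NormedAddCommGroup Y] [NormedSpace 𝕜 Y] [CompleteSpace Y]
    (u : ℕ → ℕ → Y) (f : ℕ → ℕ → (X →L[𝕜] 𝕜))
    (hu : ∀ δ : ℝ, 0 < δ → ∃ N : ℕ, ∀ F : Finset ℕ, (∀ n ∈ F, N ≤ n ∧ 1 ≤ n) → ∀ j : ℕ,
      ‖∑ n ∈ F, u n j‖ < δ)
    (N₀ : ℕ) (hbdd : ∃ M : ℝ, ∀ n : ℕ, N₀ ≤ n → ∀ k : ℕ, 1 ≤ k → ‖f n k‖ ≤ M) :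
    ∀ δ : ℝ, 0 < δ → ∃ N : ℕ, ∀ F : Finset ℕ, (∀ n ∈ F, N ≤ n ∧ 1 ≤ n) →
      ∀ j k : ℕ, 1 ≤ k →
        ‖∑ n ∈ F, (f n k).smulRight (u n j)‖ < δ := by
  intro δ hδ
  obtain ⟨M, hM⟩ := hbdd
  -- The hypothesis does not make `M` nonnegative, so `|M| + 1` serves as a positive bound.
  have hK : 0 < |M| + 1 := by positivity
  obtain ⟨N, hN⟩ := hu (δ / (8 * (|M| + 1))) (by positivity)
  refine ⟨max N N₀, fun F hF j k hk => ?_⟩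
  refine lt_of_le_of_lt (ContinuousLinearMap.opNorm_le_bound _ (half_pos hδ).le fun x => ?_)
    (half_lt_self hδ)
  have key := norm_sum_smul_le_of_subset_sums (F := F) (y := fun n => u n j)
    (c := fun n => f n k x) (ε := δ / (8 * (|M| + 1))) (M := (|M| + 1) * ‖x‖) (by positivity)
    (fun G hG => (hN G (fun n hn =>
      ⟨(le_max_left _ _).trans (hF n (hG hn)).1, (hF n (hG hn)).2⟩) j).le)
    (fun n hn => (f n k).le_of_opNorm_le
      ((hM n ((le_max_right _ _).trans (hF n hn).1) k hk).trans
        (by linarith [le_abs_self M])) x)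
  rw [sum_apply]
  simp only [ContinuousLinearMap.smulRight_apply]
  refine key.trans_eq ?_
  field_simp
  ring
end
end
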